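/- In a planar triangulation, a separating triangle can share at most one of its edges with separating triangles that contain it, where triangle A contains triangle B if the interior of B is a proper subgraph of the interior of A. -/

import Mathlib

/-- A straight-line (plane) embedding of a simple graph: vertices map injectively
to points of the plane, no vertex lies on the interior of an edge, and two
distinct edges intersect only in shared endpoints. -/
def IsPlanarEmbedding {n : ℕ} (G : SimpleGraph (Fin n))
    (p : Fin n → EuclideanSpace ℝ (Fin 2)) : Prop :=
  Function.Injective p ∧
  (∀ u v w : Fin n, G.Adj u v → p w ∈ segment ℝ (p u) (p v) → w = u ∨ w = v) ∧
  (∀ u v x y : Fin n, G.Adj u v → G.Adj x y → ({u, v} : Set (Fin n)) ≠ {x, y} →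
    segment ℝ (p u) (p v) ∩ segment ℝ (p x) (p y) ⊆
      p '' (({u, v} : Set (Fin n)) ∩ {x, y}))

/-- A graph is planar if it admits a straight-line plane embedding (Fáry). -/
def IsPlanar {n : ℕ} (G : SimpleGraph (Fin n)) : Prop :=
  ∃ p : Fin n → EuclideanSpace ℝ (Fin 2), IsPlanarEmbedding G p

/-- A (planar) triangulation is a maximal simple planar graph. -/
def IsTriangulation {n : ℕ} (G : SimpleGraph (Fin n)) : Prop :=
  IsPlanar G ∧ ∀ u v : Fin n, u ≠ v → ¬ G.Adj u v →
    ¬ IsPlanar (G ⊔ SimpleGraph.fromEdgeSet {s(u, v)})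

/-- A separating triangle: three mutually adjacent vertices whose removal
disconnects the graph. -/
def IsSepTriangle {n : ℕ} (G : SimpleGraph (Fin n)) (a b c : Fin n) : Prop :=
  G.Adj a b ∧ G.Adj b c ∧ G.Adj a c ∧
  ¬ (G.induce {v : Fin n | v ∉ ({a, b, c} : Set (Fin n))}).Connected

/-- 4-connectivity: no vertex cutset of size at most 3. -/
def FourConnected {n : ℕ} (G : SimpleGraph (Fin n)) : Prop :=
  ∀ S : Finset (Fin n), S.card ≤ 3 → (G.induce {v : Fin n | v ∉ S}).Connected

/-- Reachability by a walk avoiding the vertex set D. -/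
def AvoidReach {n : ℕ} (G : SimpleGraph (Fin n)) (D : Set (Fin n))
    (u w : Fin n) : Prop :=
  ∃ p : G.Walk u w, ∀ x ∈ p.support, x ∉ D

/-- The interior of a separating triangle {a,b,c}, relative to a designated
outer face outF: the vertices that cannot reach any surviving outer-face
vertex once the triangle is removed. -/
def interiorOf {n : ℕ} (G : SimpleGraph (Fin n)) (outF : Finset (Fin n))
    (a b c : Fin n) : Set (Fin n) :=
  {u | u ∉ ({a, b, c} : Set (Fin n)) ∧
    ¬ ∃ o ∈ outF, (o : Fin n) ∉ ({a, b, c} : Set (Fin n)) ∧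
      AvoidReach G ({a, b, c} : Set (Fin n)) u o}

/-- The point `(x, y)` lies on the straight segment drawn from `u` to `v`. -/
def OnSeg {n : ℕ} (X Y : Fin n → ℝ) (u v : Fin n) (x y : ℝ) : Prop :=
  ∃ t : ℝ, 0 ≤ t ∧ t ≤ 1 ∧ x = X u + t * (X v - X u) ∧ y = Y u + t * (Y v - Y u)

/-- A straight-line plane drawing given by coordinate functions. -/
structure Drawing {n : ℕ} (G : SimpleGraph (Fin n)) (X Y : Fin n → ℝ) : Prop where
  inj : ∀ u v, X u = X v → Y u = Y v → u = v
  vert : ∀ u v w, G.Adj u v → OnSeg X Y u v (X w) (Y w) → w = u ∨ w = v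
  cross : ∀ u v c d x y, G.Adj u v → G.Adj c d → s(u, v) ≠ s(c, d) →
    OnSeg X Y u v x y → OnSeg X Y c d x y →
    ∃ k, (k = u ∨ k = v) ∧ (k = c ∨ k = d) ∧ X k = x ∧ Y k = y

/-- In every drawing, any two vertices that see each other are adjacent. -/
def SeeingAdjacent {n : ℕ} (G : SimpleGraph (Fin n)) : Prop :=
  ∀ X Y, Drawing G X Y → ∀ u v, u ≠ v →
    (∀ w t, 0 < t → t < 1 → X w = X u + t * (X v - X u) → Y w = Y u + t * (Y v - Y u) → False) →
    (∀ c d x y t, G.Adj c d → 0 < t → t < 1 → x = X u + t * (X v - X u) →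
      y = Y u + t * (Y v - Y u) → OnSeg X Y c d x y → False) → G.Adj u v

/-- `w` lies in the open cone with apex `b` spanned by `x` and `y`. -/
def InCone {n : ℕ} (X Y : Fin n → ℝ) (b x y w : Fin n) : Prop :=
  ∃ α β : ℝ, 0 < α ∧ 0 < β ∧ X w - X b = α * (X x - X b) + β * (X y - X b) ∧
    Y w - Y b = α * (Y x - Y b) + β * (Y y - Y b)

lemma between_pos {r s t : ℝ} (hr : 0 < r) (hs : 0 < s) (t0 : 0 ≤ t) (t1 : t ≤ 1) :
    0 < r + t * (s - r) := by
  rcases t1.eq_or_lt with rfl | t1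
  · linarith
  · nlinarith [mul_pos (sub_pos.2 t1) hr, mul_nonneg t0 hs.le]

section Segments

variable {n : ℕ} {X Y : Fin n → ℝ} {u v : Fin n} {x y : ℝ}

lemma OnSeg.symm (h : OnSeg X Y u v x y) : OnSeg X Y v u x y := by
  obtain ⟨t, h0, h1, hx, hy⟩ := h
  exact ⟨1 - t, by linarith, by linarith, by rw [hx]; ring, by rw [hy]; ring⟩

lemma OnSeg.toward_left (h : OnSeg X Y u v x y) {t : ℝ} (h0 : 0 ≤ t) (h1 : t ≤ 1) :
    OnSeg X Y u v (x + t * (X u - x)) (y + t * (Y u - y)) := by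
  obtain ⟨r, r0, r1, hx, hy⟩ := h
  refine ⟨(1 - t) * r, by nlinarith, by nlinarith, ?_, ?_⟩
  · rw [hx]; ring
  · rw [hy]; ring

lemma mem_segment_iff_onSeg (p : Fin n → EuclideanSpace ℝ (Fin 2)) (u v : Fin n)
    (q : EuclideanSpace ℝ (Fin 2)) :
    q ∈ segment ℝ (p u) (p v) ↔ OnSeg (fun k => p k 0) (fun k => p k 1) u v (q 0) (q 1) := by
  rw [segment_eq_image']
  constructor
  · rintro ⟨t, ⟨h0, h1⟩, rfl⟩
    exact ⟨t, h0, h1, by simp, by simp⟩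
  · rintro ⟨t, h0, h1, hx, hy⟩
    refine ⟨t, ⟨h0, h1⟩, ?_⟩
    ext i
    fin_cases i
    · simpa using hx.symm
    · simpa using hy.symm

lemma pair_ne_iff_sym2_ne (u v c d : Fin n) :
    ({u, v} : Set (Fin n)) ≠ {c, d} ↔ s(u, v) ≠ s(c, d) := by
  rw [Ne, Ne, Set.pair_eq_pair_iff, Sym2.eq_iff]

lemma IsPlanarEmbedding.drawing {G : SimpleGraph (Fin n)} {p : Fin n → EuclideanSpace ℝ (Fin 2)}
    (h : IsPlanarEmbedding G p) : Drawing G (fun k => p k 0) (fun k => p k 1) := by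
  obtain ⟨h1, h2, h3⟩ := h
  refine ⟨fun u v hx hy => h1 ?_, fun u v w ha hs => ?_, fun u v c d x y ha hb hne hs ht => ?_⟩
  · ext i
    fin_cases i
    · exact hx
    · exact hy
  · exact h2 u v w ha ((mem_segment_iff_onSeg p u v _).2 hs)
  · have := h3 u v c d ha hb ((pair_ne_iff_sym2_ne ..).2 hne)
      ⟨(mem_segment_iff_onSeg p u v !₂[x, y]).2 (by simpa using hs),
        (mem_segment_iff_onSeg p c d !₂[x, y]).2 (by simpa using ht)⟩
    obtain ⟨k, ⟨hk1, hk2⟩, hk⟩ := this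
    exact ⟨k, hk1, hk2, by simp [hk], by simp [hk]⟩

lemma Drawing.isPlanar {G : SimpleGraph (Fin n)} (D : Drawing G X Y) : IsPlanar G := by
  refine ⟨fun k => !₂[X k, Y k], fun u v h => ?_, fun u v w ha hs => ?_,
    fun u v c d ha hb hne q hq => ?_⟩
  · have h0 := congrArg (fun q : EuclideanSpace ℝ (Fin 2) => q 0) h
    have h1 := congrArg (fun q : EuclideanSpace ℝ (Fin 2) => q 1) h
    exact D.inj u v (by simpa using h0) (by simpa using h1)
  · have hs' := (mem_segment_iff_onSeg (fun k => !₂[X k, Y k]) _ _ _).1 hs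
    exact D.vert u v w ha (by simpa using hs')
  · have hq1 := (mem_segment_iff_onSeg (fun k => !₂[X k, Y k]) _ _ _).1 hq.1
    have hq2 := (mem_segment_iff_onSeg (fun k => !₂[X k, Y k]) _ _ _).1 hq.2
    obtain ⟨k, k1, k2, kx, ky⟩ := D.cross u v c d (q 0) (q 1) ha hb
      ((pair_ne_iff_sym2_ne ..).1 hne) (by simpa using hq1) (by simpa using hq2)
    refine ⟨k, ⟨k1, k2⟩, ?_⟩
    ext i
    fin_cases i
    · simpa using kx
    · simpa using ky

end Segments

lemma IsTriangulation.seeingAdjacent {n : ℕ} {G : SimpleGraph (Fin n)} (hG : IsTriangulation G) :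
    SeeingAdjacent G := by
  intro X Y D u v huv hv he
  by_contra hn
  refine hG.2 u v huv hn (Drawing.isPlanar (X := X) (Y := Y) ?_)
  have hadj : ∀ c d, (G ⊔ SimpleGraph.fromEdgeSet {s(u, v)}).Adj c d →
      G.Adj c d ∨ s(c, d) = s(u, v) := by
    intro c d h
    simp only [SimpleGraph.sup_adj, SimpleGraph.fromEdgeSet_adj, Set.mem_singleton_iff] at h
    tauto
  have hvert : ∀ w, OnSeg X Y u v (X w) (Y w) → w = u ∨ w = v := by
    rintro w ⟨t, t0, t1, hx, hy⟩
    rcases t0.eq_or_lt with rfl | t0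
    · exact .inl (D.inj _ _ (by linarith) (by linarith))
    rcases t1.eq_or_lt with rfl | t1
    · exact .inr (D.inj _ _ (by linarith) (by linarith))
    exact (hv w t t0 t1 hx hy).elim
  have hcross : ∀ c d x y, G.Adj c d → OnSeg X Y u v x y → OnSeg X Y c d x y →
      ∃ k, (k = u ∨ k = v) ∧ (k = c ∨ k = d) ∧ X k = x ∧ Y k = y := by
    rintro c d x y ha ⟨t, t0, t1, hx, hy⟩ hs
    rcases t0.eq_or_lt with rfl | t0
    · have hx' : X u = x := by linarith
      have hy' : Y u = y := by linarith
      exact ⟨u, .inl rfl, D.vert c d u ha (by rwa [hx', hy']), hx', hy'⟩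
    rcases t1.eq_or_lt with rfl | t1
    · have hx' : X v = x := by linarith
      have hy' : Y v = y := by linarith
      exact ⟨v, .inr rfl, D.vert c d v ha (by rwa [hx', hy']), hx', hy'⟩
    exact (he c d x y t ha t0 t1 hx hy hs).elim
  have hnew : ∀ {c d x y}, s(c, d) = s(u, v) → OnSeg X Y c d x y → OnSeg X Y u v x y := by
    intro c d x y h hs
    rcases Sym2.eq_iff.1 h with ⟨rfl, rfl⟩ | ⟨rfl, rfl⟩
    · exact hs
    · exact hs.symm
  have hmem : ∀ {c d k}, s(c, d) = s(u, v) → (k = u ∨ k = v) → (k = c ∨ k = d) := by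
    intro c d k h hk
    rcases Sym2.eq_iff.1 h with ⟨rfl, rfl⟩ | ⟨rfl, rfl⟩ <;> tauto
  refine ⟨D.inj, fun c d w ha hs => ?_, fun c d c' d' x y ha hb hne hs ht => ?_⟩
  · rcases hadj c d ha with ha | ha
    · exact D.vert c d w ha hs
    · exact hmem ha (hvert w (hnew ha hs))
  · rcases hadj c d ha with ha | ha <;> rcases hadj c' d' hb with hb | hb
    · exact D.cross c d c' d' x y ha hb hne hs ht
    · obtain ⟨k, k1, k2, kx⟩ := hcross c d x y ha (hnew hb ht) hs
      exact ⟨k, k2, hmem hb k1, kx⟩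
    · obtain ⟨k, k1, k2, kx⟩ := hcross c' d' x y hb (hnew ha hs) ht
      exact ⟨k, hmem ha k1, k2, kx⟩
    · exact (hne (ha.trans hb.symm)).elim

namespace Drawing

variable {n : ℕ} {G : SimpleGraph (Fin n)} {X Y : Fin n → ℝ}

/-- Transport of a drawing along an injective map of the plane that maps the segment of each
edge onto the segment between the images of its ends. -/
lemma map (D : Drawing G X Y) (f g : ℝ → ℝ → ℝ)
    (hinj : ∀ x y x' y', f x y = f x' y' → g x y = g x' y' → x = x' ∧ y = y')
    (hseg : ∀ u v x' y', G.Adj u v →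
      OnSeg (fun k => f (X k) (Y k)) (fun k => g (X k) (Y k)) u v x' y' →
      ∃ x y, OnSeg X Y u v x y ∧ f x y = x' ∧ g x y = y') :
    Drawing G (fun k => f (X k) (Y k)) (fun k => g (X k) (Y k)) := by
  refine ⟨fun u v hx hy => ?_, fun u v w ha hs => ?_, fun u v c d x y ha hb hne hs ht => ?_⟩
  · obtain ⟨h1, h2⟩ := hinj _ _ _ _ hx hy
    exact D.inj u v h1 h2
  · obtain ⟨x, y, h, hx, hy⟩ := hseg u v _ _ ha hs
    obtain ⟨rfl, rfl⟩ := hinj _ _ _ _ hx hy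
    exact D.vert u v w ha h
  · obtain ⟨x1, y1, h1, hx1, hy1⟩ := hseg u v _ _ ha hs
    obtain ⟨x2, y2, h2, hx2, hy2⟩ := hseg c d _ _ hb ht
    obtain ⟨rfl, rfl⟩ := hinj _ _ _ _ (hx1.trans hx2.symm) (hy1.trans hy2.symm)
    obtain ⟨k, k1, k2, rfl, rfl⟩ := D.cross u v c d _ _ ha hb hne h1 h2
    exact ⟨k, k1, k2, hx1, hy1⟩

lemma affine (D : Drawing G X Y) (a b c d e f : ℝ) (h : a * d - b * c ≠ 0) :
    Drawing G (fun k => a * X k + b * Y k + e) (fun k => c * X k + d * Y k + f) := by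
  refine D.map (fun x y => a * x + b * y + e) (fun x y => c * x + d * y + f) ?_ ?_
  · intro x y x' y' h1 h2
    constructor
    · refine mul_left_cancel₀ h ?_
      linear_combination d * h1 - b * h2
    · refine mul_left_cancel₀ h ?_
      linear_combination a * h2 - c * h1
  · rintro u v x' y' - ⟨t, t0, t1, hx, hy⟩
    refine ⟨_, _, ⟨t, t0, t1, rfl, rfl⟩, ?_, ?_⟩
    · rw [hx]; ring
    · rw [hy]; ring

/-- Affine coordinates in which `b`, `x`, `y` become `(0, 0)`, `(1, 0)`, `(0, 1)`. -/
lemma exists_normalized (D : Drawing G X Y) (b x y : Fin n)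
    (h : (X x - X b) * (Y y - Y b) - (X y - X b) * (Y x - Y b) ≠ 0) :
    ∃ X' Y', Drawing G X' Y' ∧ X' b = 0 ∧ Y' b = 0 ∧ X' x = 1 ∧ Y' x = 0 ∧ X' y = 0 ∧ Y' y = 1 ∧
      ∀ w, X w - X b = X' w * (X x - X b) + Y' w * (X y - X b) ∧
        Y w - Y b = X' w * (Y x - Y b) + Y' w * (Y y - Y b) := by
  obtain ⟨δ, hδ⟩ : ∃ δ, δ = (X x - X b) * (Y y - Y b) - (X y - X b) * (Y x - Y b) := ⟨_, rfl⟩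
  rw [← hδ] at h
  refine ⟨_, _, D.affine ((Y y - Y b) / δ) (-(X y - X b) / δ) (-(Y x - Y b) / δ)
    ((X x - X b) / δ) (-((Y y - Y b) * X b - (X y - X b) * Y b) / δ)
    (-((X x - X b) * Y b - (Y x - Y b) * X b) / δ) ?_, ?_, ?_, ?_, ?_, ?_, ?_, fun w => ⟨?_, ?_⟩⟩
  · have : (Y y - Y b) / δ * ((X x - X b) / δ) - -(X y - X b) / δ * (-(Y x - Y b) / δ) = 1 / δ := by
      field_simp
      rw [hδ]; ring
    rw [this]
    exact one_div_ne_zero h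
  all_goals field_simp
  all_goals try rw [hδ]
  all_goals ring

/-- Two edges at a common vertex do not leave it in the same direction. -/
lemma not_same_ray (D : Drawing G X Y) {b x y : Fin n} (hx : G.Adj b x) (hy : G.Adj b y)
    (hne : x ≠ y) {μ : ℝ} (hμ : 0 < μ) (h1 : X y - X b = μ * (X x - X b))
    (h2 : Y y - Y b = μ * (Y x - Y b)) : False := by
  rcases le_total μ 1 with h | h
  · rcases D.vert b x y hx ⟨μ, hμ.le, h, by linarith, by linarith⟩ with rfl | rfl
    · exact hy.ne rfl
    · exact hne rfl
  · have hi : μ * μ⁻¹ = 1 := mul_inv_cancel₀ hμ.ne'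
    rcases D.vert b y x hy ⟨μ⁻¹, by positivity, inv_le_one_of_one_le₀ h,
      by linear_combination μ⁻¹ * (-h1) - (X x - X b) * hi,
      by linear_combination μ⁻¹ * (-h2) - (Y x - Y b) * hi⟩ with rfl | rfl
    · exact hx.ne rfl
    · exact hne rfl

lemma exists_smul_of_det_eq_zero (D : Drawing G X Y) {b x y : Fin n} (hx : b ≠ x)
    (h : (X x - X b) * (Y y - Y b) - (X y - X b) * (Y x - Y b) = 0) :
    ∃ μ, X y - X b = μ * (X x - X b) ∧ Y y - Y b = μ * (Y x - Y b) := by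
  by_cases h0 : X x - X b = 0
  · have h1 : Y x - Y b ≠ 0 := fun h1 => hx (D.inj _ _ (by linarith) (by linarith))
    refine ⟨(Y y - Y b) / (Y x - Y b), ?_, by field_simp⟩
    rw [h0] at h ⊢
    have : (X y - X b) * (Y x - Y b) = 0 := by linarith
    simpa [h1] using this
  · refine ⟨(X y - X b) / (X x - X b), by field_simp, ?_⟩
    field_simp
    linarith

lemma det_ne_zero_of_triangle (D : Drawing G X Y) {b x y : Fin n} (hx : G.Adj b x)
    (hy : G.Adj b y) (hxy : G.Adj x y) :
    (X x - X b) * (Y y - Y b) - (X y - X b) * (Y x - Y b) ≠ 0 := by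
  intro h
  obtain ⟨μ, h1, h2⟩ := D.exists_smul_of_det_eq_zero hx.ne h
  rcases le_or_gt μ 0 with h0 | h0
  · have hp : 1 - μ ≠ 0 := by linarith
    rcases D.vert x y b hxy ⟨1 / (1 - μ), by apply div_nonneg <;> linarith,
      by rw [div_le_one (by linarith)]; linarith,
      by field_simp; linear_combination -h1, by field_simp; linear_combination -h2⟩ with h | h
    · exact hx.ne h
    · exact hy.ne h
  · exact D.not_same_ray hx hy hxy.ne h0 h1 h2

end Drawing

lemma exists_first_zero {f₀ f₁ g₀ g₁ : ℝ} (hf : 0 < f₀) (hg : 0 < g₀) (h : f₁ ≤ 0 ∨ g₁ ≤ 0) :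
    ∃ t, 0 < t ∧ t ≤ 1 ∧ ((f₀ + t * (f₁ - f₀) = 0 ∧ 0 ≤ g₀ + t * (g₁ - g₀)) ∨
      (g₀ + t * (g₁ - g₀) = 0 ∧ 0 ≤ f₀ + t * (f₁ - f₀))) := by
  by_cases hfg : f₁ * g₀ ≤ g₁ * f₀
  · have hf1 : f₁ ≤ 0 := by
      rcases h with h | h
      · exact h
      · by_contra hc
        nlinarith [mul_pos (not_le.1 hc) hg]
    have hd : 0 < f₀ - f₁ := by linarith
    refine ⟨f₀ / (f₀ - f₁), by positivity, by rw [div_le_one hd]; linarith, .inl ⟨?_, ?_⟩⟩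
    · field_simp; ring
    · have : g₀ + f₀ / (f₀ - f₁) * (g₁ - g₀) = (g₁ * f₀ - f₁ * g₀) / (f₀ - f₁) := by
        field_simp; ring
      rw [this]
      exact div_nonneg (by linarith) hd.le
  · have hg1 : g₁ ≤ 0 := by
      rcases h with h | h
      · by_contra hc
        nlinarith [mul_pos (not_le.1 hc) hf]
      · exact h
    have hd : 0 < g₀ - g₁ := by linarith
    refine ⟨g₀ / (g₀ - g₁), by positivity, by rw [div_le_one hd]; linarith, .inr ⟨?_, ?_⟩⟩
    · field_simp; ring
    · have : f₀ + g₀ / (g₀ - g₁) * (f₁ - f₀) = (f₁ * g₀ - g₁ * f₀) / (g₀ - g₁) := by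
        field_simp; ring
      rw [this]
      exact div_nonneg (by linarith) hd.le

namespace Drawing

variable {n : ℕ} {G : SimpleGraph (Fin n)} {X Y : Fin n → ℝ}

/-- A segment through a point of the open positive quadrant that does not reach the axes below
the antidiagonal through that point ends in the quadrant below that antidiagonal. -/
lemma exists_end_below {c d : Fin n} {x y : ℝ} (hs : OnSeg X Y c d x y) (hx : 0 < x) (hy : 0 < y)
    (h1 : ∀ s, 0 ≤ s → s ≤ x + y → ¬ OnSeg X Y c d s 0)
    (h2 : ∀ s, 0 ≤ s → s ≤ x + y → ¬ OnSeg X Y c d 0 s) :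
    ∃ k, (k = c ∨ k = d) ∧ 0 < X k ∧ 0 < Y k ∧ X k + Y k ≤ x + y := by
  wlog hc : X c + Y c ≤ x + y generalizing c d
  · have hd : X d + Y d ≤ x + y := by
      obtain ⟨t, t0, t1, ex, ey⟩ := hs
      by_contra hd
      have := between_pos (sub_pos.2 (not_le.1 hc)) (sub_pos.2 (not_le.1 hd)) t0 t1
      nlinarith
    obtain ⟨k, hk, h⟩ := this hs.symm (fun s a b h => h1 s a b h.symm)
      (fun s a b h => h2 s a b h.symm) hd
    exact ⟨k, hk.symm, h⟩
  refine ⟨c, .inl rfl, ?_⟩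
  by_contra hn
  have hor : X c ≤ 0 ∨ Y c ≤ 0 := by
    by_contra! h
    exact hn ⟨h.1, h.2, hc⟩
  obtain ⟨t, t0, t1, h⟩ := exists_first_zero hx hy hor
  have hm := hs.toward_left t0.le t1
  have hsum : (x + t * (X c - x)) + (y + t * (Y c - y)) ≤ x + y := by nlinarith
  rcases h with ⟨h, h'⟩ | ⟨h, h'⟩
  · rw [h] at hm hsum
    exact h2 _ h' (by linarith) hm
  · rw [h] at hm hsum
    exact h1 _ h' (by linarith) hm

/-- Consecutive neighbours of `b` at an angle less than `π` are adjacent. -/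
lemma adj_of_consecutive (hM : SeeingAdjacent G) (D : Drawing G X Y) {b x y : Fin n}
    (hXb : X b = 0) (hYb : Y b = 0) (hXx : X x = 1) (hYx : Y x = 0) (hXy : X y = 0)
    (hYy : Y y = 1) (hx : G.Adj b x) (hy : G.Adj b y)
    (hno : ∀ w, G.Adj b w → 0 < X w → 0 < Y w → False) : G.Adj x y := by
  -- edges meeting the open quadrant do not end in `b`
  have hb : ∀ c d x' y', G.Adj c d → 0 < x' → 0 < y' → OnSeg X Y c d x' y' → b ≠ c := by
    rintro c d x' y' ha h1 h2 ⟨t, t0, t1, ex, ey⟩ rfl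
    rw [hXb] at ex
    rw [hYb] at ey
    exact hno d ha (by nlinarith) (by nlinarith)
  -- an edge not ending in `b` meets the sides of the triangle only in `x` or `y`
  have hside : ∀ c d x' y', G.Adj c d → b ≠ c → b ≠ d → 0 ≤ x' → 0 ≤ y' → x' + y' ≤ 1 →
      (x' = 0 ∨ y' = 0) → OnSeg X Y c d x' y' →
      (x' = 1 ∧ y' = 0 ∧ (x = c ∨ x = d)) ∨ (x' = 0 ∧ y' = 1 ∧ (y = c ∨ y = d)) := by
    intro c d x' y' ha hbc hbd h1 h2 h3 h4 hs
    rcases h4 with rfl | rfl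
    · obtain ⟨k, k1, k2, kx, ky⟩ := D.cross c d b y 0 y' ha hy (by
        intro h
        rcases Sym2.eq_iff.1 h with ⟨h, -⟩ | ⟨-, h⟩
        · exact hbc h.symm
        · exact hbd h.symm) hs ⟨y', h2, by linarith, by rw [hXb, hXy]; ring, by rw [hYb, hYy]; ring⟩
      rcases k2 with rfl | rfl
      · exact (k1.elim hbc hbd).elim
      · exact .inr ⟨rfl, by linarith, k1⟩
    · obtain ⟨k, k1, k2, kx, ky⟩ := D.cross c d b x x' 0 ha hx (by
        intro h
        rcases Sym2.eq_iff.1 h with ⟨h, -⟩ | ⟨-, h⟩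
        · exact hbc h.symm
        · exact hbd h.symm) hs ⟨x', h1, by linarith, by rw [hXb, hXx]; ring, by rw [hYb, hYx]; ring⟩
      rcases k2 with rfl | rfl
      · exact (k1.elim hbc hbd).elim
      · exact .inl ⟨by linarith, rfl, k1⟩
  have hempty : ∀ w, 0 < X w → 0 < Y w → X w + Y w ≤ 1 → False := by
    classical
    by_contra! hne
    obtain ⟨w₀, hw₀⟩ := hne
    obtain ⟨w, hw, hmin⟩ := Finset.exists_min_image
      (Finset.univ.filter fun w => 0 < X w ∧ 0 < Y w ∧ X w + Y w ≤ 1) (fun w => X w + Y w)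
      ⟨w₀, by simpa using hw₀⟩
    simp only [Finset.mem_filter, Finset.mem_univ, true_and] at hw hmin
    obtain ⟨w1, w2, w3⟩ := hw
    refine hno w (hM X Y D b w (by rintro rfl; linarith) ?_ ?_) w1 w2
    · intro k t t0 t1 ex ey
      rw [hXb] at ex
      rw [hYb] at ey
      have e1 : X k = t * X w := by linarith
      have e2 : Y k = t * Y w := by linarith
      have := hmin k ⟨by rw [e1]; positivity, by rw [e2]; positivity, by nlinarith⟩
      nlinarith
    · intro c d x' y' t ha t0 t1 ex ey hs
      rw [hXb] at ex
      rw [hYb] at ey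
      have e1 : x' = t * X w := by linarith
      have e2 : y' = t * Y w := by linarith
      have p1 : 0 < x' := by rw [e1]; positivity
      have p2 : 0 < y' := by rw [e2]; positivity
      have hlt : x' + y' < X w + Y w := by nlinarith
      have hbc := hb c d x' y' ha p1 p2 hs
      have hbd := hb d c x' y' ha.symm p1 p2 hs.symm
      obtain ⟨k, -, k1, k2, k3⟩ := exists_end_below hs p1 p2
        (fun s s0 s1 h => by
          rcases hside c d s 0 ha hbc hbd s0 le_rfl (by linarith) (.inr rfl) h with h | h <;>
            linarith [h.1, h.2.1])
        (fun s s0 s1 h => by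
          rcases hside c d 0 s ha hbc hbd le_rfl s0 (by linarith) (.inl rfl) h with h | h <;>
            linarith [h.1, h.2.1])
      have := hmin k ⟨k1, k2, by linarith⟩
      linarith
  by_contra hxy
  refine hxy (hM X Y D x y (by rintro rfl; linarith) ?_ ?_)
  · intro k t t0 t1 ex ey
    rw [hXx, hXy] at ex
    rw [hYx, hYy] at ey
    exact hempty k (by linarith) (by linarith) (by linarith)
  · intro c d x' y' t ha t0 t1 ex ey hs
    rw [hXx, hXy] at ex
    rw [hYx, hYy] at ey
    have p1 : 0 < x' := by linarith
    have p2 : 0 < y' := by linarith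
    have hbc := hb c d x' y' ha p1 p2 hs
    have hbd := hb d c x' y' ha.symm p1 p2 hs.symm
    have hnx : ∀ c d, G.Adj c d → OnSeg X Y c d x' y' → x ≠ c := by
      rintro c d ha ⟨r, r0, r1, ex', ey'⟩ rfl
      rw [hXx] at ex'
      rw [hYx] at ey'
      have hr : 0 < r := by
        rcases r0.eq_or_lt with rfl | h
        · linarith
        · exact h
      have hsum : X d + Y d = 1 := by
        have : r * (X d + Y d - 1) = 0 := by linarith
        have := (mul_eq_zero.1 this).resolve_left hr.ne'
        linarith
      have hYd : 0 < Y d := by nlinarith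
      rcases lt_trichotomy (X d) 0 with h | h | h
      · rcases D.vert x d y ha ⟨1 / Y d, by positivity, by rw [div_le_one hYd]; linarith,
          by rw [hXx, hXy]; field_simp; linarith, by rw [hYx, hYy]; field_simp; ring⟩ with h' | h'
        · rw [h'] at hXy; linarith
        · rw [h'] at hXy; linarith
      · rw [D.inj y d (by linarith) (by linarith)] at hxy
        exact hxy ha
      · exact hempty d h hYd hsum.le
    have hny : ∀ c d, G.Adj c d → OnSeg X Y c d x' y' → y ≠ c := by
      rintro c d ha ⟨r, r0, r1, ex', ey'⟩ rfl
      rw [hXy] at ex'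
      rw [hYy] at ey'
      have hr : 0 < r := by
        rcases r0.eq_or_lt with rfl | h
        · linarith
        · exact h
      have hsum : X d + Y d = 1 := by
        have : r * (X d + Y d - 1) = 0 := by linarith
        have := (mul_eq_zero.1 this).resolve_left hr.ne'
        linarith
      have hXd : 0 < X d := by nlinarith
      rcases lt_trichotomy (Y d) 0 with h | h | h
      · rcases D.vert y d x ha ⟨1 / X d, by positivity, by rw [div_le_one hXd]; linarith,
          by rw [hXx, hXy]; field_simp; ring, by rw [hYx, hYy]; field_simp; linarith⟩ with h' | h'
        · rw [h'] at hYx; linarith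
        · rw [h'] at hYx; linarith
      · rw [D.inj x d (by linarith) (by linarith)] at hxy
        exact hxy ha.symm
      · exact hempty d hXd h hsum.le
    have hend : ∀ u v, OnSeg X Y c d u v → 0 ≤ u → 0 ≤ v → u + v ≤ 1 → (u = 0 ∨ v = 0) →
        False := by
      intro u v h h1 h2 h3 h4
      rcases hside c d u v ha hbc hbd h1 h2 h3 h4 h with h | h
      · exact h.2.2.elim (hnx c d ha hs) (hnx d c ha.symm hs.symm)
      · exact h.2.2.elim (hny c d ha hs) (hny d c ha.symm hs.symm)
    obtain ⟨k, -, k1, k2, k3⟩ := exists_end_below hs p1 p2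
      (fun s s0 s1 h => hend s 0 h s0 le_rfl (by linarith) (.inr rfl))
      (fun s s0 s1 h => hend 0 s h le_rfl s0 (by linarith) (.inl rfl))
    exact hempty k k1 k2 (by linarith)

/-- If all edges leaving `C` end in `b` or `z`, then the cone at `b` spanned by a neighbour
inside `C` and a neighbour outside `C` contains `z`. -/
lemma inCone_of_cut (hM : SeeingAdjacent G) (D : Drawing G X Y) {C : Set (Fin n)} {b z : Fin n}
    (hz : z ∉ C) (hcut : ∀ u ∈ C, ∀ w ∉ C, G.Adj u w → w = b ∨ w = z) {x y : Fin n}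
    (hx : G.Adj b x) (hy : G.Adj b y) (hxC : x ∈ C) (hyC : y ∉ C) (hyz : y ≠ z)
    (hdet : (X x - X b) * (Y y - Y b) - (X y - X b) * (Y x - Y b) ≠ 0) :
    InCone X Y b x y z := by
  classical
  by_contra hcone
  induction hm : (Finset.univ.filter fun w => InCone X Y b x y w).card using
    Nat.strong_induction_on generalizing x y with
  | _ m ih =>
  by_cases hex : ∃ w, G.Adj b w ∧ InCone X Y b x y w
  · obtain ⟨w, hw, hwc⟩ := hex
    have hwz : w ≠ z := by rintro rfl; exact hcone hwc
    obtain ⟨α, β, α0, β0, e1, e2⟩ := id hwc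
    by_cases hwC : w ∈ C
    · have hdet' : (X w - X b) * (Y y - Y b) - (X y - X b) * (Y w - Y b) ≠ 0 := by
        have : (X w - X b) * (Y y - Y b) - (X y - X b) * (Y w - Y b) =
          α * ((X x - X b) * (Y y - Y b) - (X y - X b) * (Y x - Y b)) := by rw [e1, e2]; ring
        rw [this]
        exact mul_ne_zero α0.ne' hdet
      have hsub : ∀ k, InCone X Y b w y k → InCone X Y b x y k := by
        rintro k ⟨γ, δ, γ0, δ0, f1, f2⟩
        exact ⟨γ * α, γ * β + δ, by positivity, by positivity, by rw [f1, e1]; ring,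
          by rw [f2, e2]; ring⟩
      refine ih _ ?_ hw hy hwC hyC hyz hdet' (fun h => hcone (hsub z h)) rfl
      rw [← hm]
      refine Finset.card_lt_card (Finset.ssubset_iff_of_subset ?_ |>.2 ⟨w, by simpa using hwc, ?_⟩)
      · intro k hk
        simp only [Finset.mem_filter, Finset.mem_univ, true_and] at hk ⊢
        exact hsub k hk
      · simp only [Finset.mem_filter, Finset.mem_univ, true_and]
        rintro ⟨γ, δ, γ0, δ0, f1, f2⟩
        have : δ * ((X w - X b) * (Y y - Y b) - (X y - X b) * (Y w - Y b)) = 0 := by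
          linear_combination (Y w - Y b) * f1 - (X w - X b) * f2
        exact (mul_ne_zero δ0.ne' hdet') this
    · have hdet' : (X x - X b) * (Y w - Y b) - (X w - X b) * (Y x - Y b) ≠ 0 := by
        have : (X x - X b) * (Y w - Y b) - (X w - X b) * (Y x - Y b) =
          β * ((X x - X b) * (Y y - Y b) - (X y - X b) * (Y x - Y b)) := by rw [e1, e2]; ring
        rw [this]
        exact mul_ne_zero β0.ne' hdet
      have hsub : ∀ k, InCone X Y b x w k → InCone X Y b x y k := by
        rintro k ⟨γ, δ, γ0, δ0, f1, f2⟩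
        exact ⟨γ + δ * α, δ * β, by positivity, by positivity, by rw [f1, e1]; ring,
          by rw [f2, e2]; ring⟩
      refine ih _ ?_ hx hw hxC hwC hwz hdet' (fun h => hcone (hsub z h)) rfl
      rw [← hm]
      refine Finset.card_lt_card (Finset.ssubset_iff_of_subset ?_ |>.2 ⟨w, by simpa using hwc, ?_⟩)
      · intro k hk
        simp only [Finset.mem_filter, Finset.mem_univ, true_and] at hk ⊢
        exact hsub k hk
      · simp only [Finset.mem_filter, Finset.mem_univ, true_and]
        rintro ⟨γ, δ, γ0, δ0, f1, f2⟩
        have : γ * ((X x - X b) * (Y w - Y b) - (X w - X b) * (Y x - Y b)) = 0 := by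
          linear_combination (X w - X b) * f2 - (Y w - Y b) * f1
        exact (mul_ne_zero γ0.ne' hdet') this
  · obtain ⟨X', Y', D', h1, h2, h3, h4, h5, h6, h7⟩ := D.exists_normalized b x y hdet
    have hadj := D'.adj_of_consecutive hM h1 h2 h3 h4 h5 h6 hx hy
      (fun w hw p q => hex ⟨w, hw, X' w, Y' w, p, q, h7 w⟩)
    rcases hcut x hxC y hyC hadj with h | h
    · exact hy.ne h.symm
    · exact hyz h

set_option maxHeartbeats 400000 in
/-- If the edge `uv` lies on the line through `(1, 0)` and `v = (0, 1)` and no edge meets the open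
side from `b = 0` to `(1, 0)`, then `b` has a neighbour strictly above the horizontal axis and not
to the left of the vertical one. -/
lemma exists_adj_of_free_side_normalized (hM : SeeingAdjacent G) (D : Drawing G X Y)
    {b u v : Fin n} (hXb : X b = 0) (hYb : Y b = 0) (hXv : X v = 0) (hYv : Y v = 1)
    (huv : G.Adj u v) (hYu : Y u < 0) (hu : X u + Y u = 1)
    (hfree : ∀ c d s, G.Adj c d → 0 < s → s < 1 → ¬ OnSeg X Y c d s 0) :
    ∃ w, G.Adj b w ∧ 0 ≤ X w ∧ 0 < Y w := by
  classical
  -- a vertex of the triangle in the direction closest to the free side, and closest to `b`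
  let W := Finset.univ.filter fun w => 0 ≤ X w ∧ 0 < Y w ∧ X w + Y w ≤ 1
  have hW : ∀ {w}, w ∈ W ↔ 0 ≤ X w ∧ 0 < Y w ∧ X w + Y w ≤ 1 := by simp [W]
  obtain ⟨w₀, hw₀, hmax⟩ := Finset.exists_max_image W (fun w => X w / Y w)
    ⟨v, hW.2 ⟨hXv.ge, by rw [hYv]; norm_num, by rw [hXv, hYv]; norm_num⟩⟩
  obtain ⟨w, hw, hmin⟩ := Finset.exists_min_image (W.filter fun w => X w / Y w = X w₀ / Y w₀) Y
    ⟨w₀, by simp [hw₀]⟩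
  simp only [Finset.mem_filter] at hw hmin
  obtain ⟨hwW, hwr⟩ := hw
  rw [← hwr] at hmax hmin
  obtain ⟨w1, w2, w3⟩ := hW.1 hwW
  have hle : ∀ k, 0 ≤ X k → 0 < Y k → X k + Y k ≤ 1 → X k * Y w ≤ X w * Y k := by
    intro k k1 k2 k3
    have := hmax k (hW.2 ⟨k1, k2, k3⟩)
    rwa [div_le_div_iff₀ k2 w2] at this
  have hclose : ∀ k r, 0 < r → r < 1 → X k = r * X w → Y k = r * Y w → False := by
    intro k r r0 r1 h1 h2
    have k2 : 0 < Y k := by rw [h2]; positivity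
    have := hmin k ⟨hW.2 ⟨by rw [h1]; positivity, k2, by nlinarith⟩, by
      rw [h1, h2]; field_simp⟩
    nlinarith
  by_contra! hn
  have hbw : ¬ G.Adj b w := fun h => absurd w2 (not_lt.2 (hn w h w1))
  have hbne : b ≠ w := by rintro rfl; linarith
  refine hbw (hM X Y D b w hbne ?_ ?_)
  · intro k t t0 t1 ex ey
    exact hclose k t t0 t1 (by rw [ex, hXb]; ring) (by rw [ey, hYb]; ring)
  · intro c d x y t ha t0 t1 ex ey hs
    rw [hXb] at ex
    rw [hYb] at ey
    have e1 : x = t * X w := by linarith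
    have e2 : y = t * Y w := by linarith
    have hy : 0 < y := by rw [e2]; positivity
    have hsum : x + y < 1 := by nlinarith
    have hbc : ∀ c d, G.Adj c d → OnSeg X Y c d x y → b ≠ c := by
      rintro c d ha ⟨r, r0, r1, ex', ey'⟩ rfl
      rw [hXb] at ex'
      rw [hYb] at ey'
      have hr : 0 < r := by
        rcases r0.eq_or_lt with rfl | h
        · linarith
        · exact h
      have f1 : X d = t / r * X w := by field_simp; linarith
      have f2 : Y d = t / r * Y w := by field_simp; linarith
      rcases lt_trichotomy (t / r) 1 with h | h | h
      · exact hclose d (t / r) (by positivity) h f1 f2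
      · rw [h] at f1 f2
        exact hbw (D.inj w d (by linarith) (by linarith) ▸ ha)
      · have hrt : r < t := by rwa [lt_div_iff₀ hr, one_mul] at h
        rcases D.vert b d w ha ⟨r / t, by positivity, by rw [div_le_one t0]; exact hrt.le,
          by rw [hXb, f1]; field_simp; ring, by rw [hYb, f2]; field_simp; ring⟩ with h' | h'
        · exact hbne h'.symm
        · exact hbw (h' ▸ ha)
    have hbc1 := hbc c d ha hs
    have hbd1 := hbc d c ha.symm hs.symm
    have key : ∀ c d, G.Adj c d → OnSeg X Y c d x y → 0 < X c * Y w - X w * Y c → False := by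
      intro c d ha hs hL
      by_cases hin : 0 < Y c ∧ X c + Y c ≤ 1
      · have hXc : 0 ≤ X c := by
          by_contra h
          linarith [mul_nonneg w1 hin.1.le, mul_neg_of_neg_of_pos (not_le.1 h) w2]
        linarith [hle c hXc hin.1 hin.2]
      · have hor : Y c ≤ 0 ∨ 1 - (X c + Y c) ≤ 0 := by
          by_contra! h
          exact hin ⟨h.1, by linarith⟩
        obtain ⟨r, r0, r1, h⟩ := exists_first_zero hy (sub_pos.2 hsum) hor
        have hm := hs.toward_left r0.le r1
        have hLm : 0 < (x + r * (X c - x)) * Y w - X w * (y + r * (Y c - y)) := by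
          have : (x + r * (X c - x)) * Y w - X w * (y + r * (Y c - y)) =
            r * (X c * Y w - X w * Y c) := by rw [e1, e2]; ring
          rw [this]; positivity
        obtain ⟨x', hx'⟩ : ∃ x', x' = x + r * (X c - x) := ⟨_, rfl⟩
        obtain ⟨y', hy'⟩ : ∃ y', y' = y + r * (Y c - y) := ⟨_, rfl⟩
        rw [← hx', ← hy'] at hm hLm
        have h' : (y' = 0 ∧ x' + y' ≤ 1) ∨ (x' + y' = 1 ∧ 0 ≤ y') := by
          rw [hx', hy']
          rcases h with h | h
          · exact .inl ⟨h.1, by linarith [h.2]⟩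
          · exact .inr ⟨by linarith [h.1], h.2⟩
        have hy0 : 0 ≤ y' := by rcases h' with h | h <;> linarith [h.1, h.2]
        have hx0 : 0 < x' := by
          by_contra hneg
          linarith [mul_nonneg w1 hy0, mul_nonpos_of_nonpos_of_nonneg (not_lt.1 hneg) w2.le]
        by_cases hlt : x' + y' < 1
        · rcases h' with ⟨h0, -⟩ | ⟨h1, -⟩
          · rw [h0] at hm
            exact hfree c d x' ha hx0 (by linarith) hm
          · linarith
        · have hone : x' + y' = 1 := by
            rcases h' with h | h
            · linarith [h.2]
            · exact h.1
          have hne : s(c, d) ≠ s(u, v) := by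
            intro h
            obtain ⟨q, q0, q1, f1, f2⟩ := hs
            rcases Sym2.eq_iff.1 h with ⟨rfl, rfl⟩ | ⟨rfl, rfl⟩
            · have : x + y = X c + Y c + q * ((X d + Y d) - (X c + Y c)) := by rw [f1, f2]; ring
              rw [hu, hXv, hYv] at this
              linarith
            · have : x + y = X c + Y c + q * ((X d + Y d) - (X c + Y c)) := by rw [f1, f2]; ring
              rw [hu, hXv, hYv] at this
              linarith
          have hYd : 0 < 1 - Y u := by linarith
          obtain ⟨k, -, k2, kx, ky⟩ := D.cross c d u v x' y' ha huv hne hm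
            ⟨(y' - Y u) / (1 - Y u), by apply div_nonneg <;> linarith,
              by rw [div_le_one hYd]; linarith,
              by
                rw [hXv, show X u = 1 - Y u by linarith]
                field_simp
                linear_combination (1 - Y u) * hone,
              by rw [hYv]; field_simp; ring⟩
          rcases k2 with rfl | rfl
          · linarith
          · linarith
    obtain ⟨q, q0, q1, f1, f2⟩ := id hs
    have hcomb : (X c * Y w - X w * Y c) +
        q * ((X d * Y w - X w * Y d) - (X c * Y w - X w * Y c)) = 0 := by
      have : x * Y w - X w * y = 0 := by rw [e1, e2]; ring
      rw [f1, f2] at this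
      linarith
    have hc0 := not_lt.1 (key c d ha hs)
    have hd0 := not_lt.1 (key d c ha.symm hs.symm)
    -- the crossing edge lies on the line through `b` and `w`
    have hline : ∀ c d, G.Adj c d → OnSeg X Y c d x y → b ≠ c → b ≠ d →
        X c * Y w - X w * Y c = 0 → X d * Y w - X w * Y d = 0 → Y c ≤ y → False := by
      intro c d ha hs hbc hbd hc hd hcy
      have f1 : X c = Y c / Y w * X w := by field_simp; linarith
      have f2 : Y c = Y c / Y w * Y w := by field_simp
      have hlt : Y c / Y w < 1 := by rw [div_lt_one w2]; linarith [mul_lt_of_lt_one_left w2 t1]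
      rcases le_or_gt (Y c) 0 with h | h
      · obtain ⟨q, q0, q1, g1, g2⟩ := hs
        have hYd : 0 < Y d := by
          by_contra h'
          have hbal : y = (1 - q) * Y c + q * Y d := by rw [g2]; ring
          linarith [mul_nonpos_of_nonneg_of_nonpos q0 (not_lt.1 h'),
            mul_nonpos_of_nonneg_of_nonpos (sub_nonneg.2 q1) h]
        have f3 : X d = Y d / Y w * X w := by field_simp; linarith
        have hp : 0 < Y d - Y c := by linarith
        rcases D.vert c d b ha ⟨- Y c / (Y d - Y c), by apply div_nonneg <;> linarith,
          by rw [div_le_one hp]; linarith,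
          by rw [hXb, f3, f1]; field_simp; ring, by rw [hYb]; field_simp; ring⟩ with h' | h'
        · exact hbc h'
        · exact hbd h'
      · exact hclose c _ (by positivity) hlt f1 f2
    have hzero : X c * Y w - X w * Y c = 0 ∧ X d * Y w - X w * Y d = 0 ∨ x = X c ∧ y = Y c ∨
        x = X d ∧ y = Y d := by
      rcases q0.eq_or_lt with rfl | q0
      · exact .inr (.inl ⟨by linarith, by linarith⟩)
      rcases q1.eq_or_lt with rfl | q1
      · exact .inr (.inr ⟨by linarith, by linarith⟩)
      refine .inl ⟨?_, ?_⟩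
      · by_contra h
        linarith [mul_neg_of_pos_of_neg (sub_pos.2 q1) (lt_of_le_of_ne hc0 h),
          mul_nonpos_of_nonneg_of_nonpos q0.le hd0]
      · by_contra h
        linarith [mul_neg_of_pos_of_neg q0 (lt_of_le_of_ne hd0 h),
          mul_nonpos_of_nonneg_of_nonpos (sub_nonneg.2 q1.le) hc0]
    rcases hzero with ⟨hc, hd⟩ | ⟨h1, h2⟩ | ⟨h1, h2⟩
    · rcases le_total (Y c) y with h | h
      · exact hline c d ha hs hbc1 hbd1 hc hd h
      · refine hline d c ha.symm hs.symm hbd1 hbc1 hd hc ?_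
        by_contra h'
        rcases q0.eq_or_lt with rfl | q0
        · exact hclose c t t0 t1 (by linarith) (by linarith)
        · have hbal : (1 - q) * (Y c - y) + q * (Y d - y) = 0 := by rw [f2]; ring
          linarith [mul_pos q0 (sub_pos.2 (not_le.1 h')),
            mul_nonneg (sub_nonneg.2 q1) (sub_nonneg.2 h)]
    · exact hclose c t t0 t1 (by linarith) (by linarith)
    · exact hclose d t t0 t1 (by linarith) (by linarith)

/-- If the edge `uv` crosses the negative horizontal axis at `ξ` and no edge meets the axis
between `ξ` and `b = 0`, then `b` has a neighbour in the cone spanned by the crossing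
point and the upper end `v`. -/
lemma exists_adj_of_free_side (hM : SeeingAdjacent G) (D : Drawing G X Y)
    {b u v : Fin n} (hXb : X b = 0) (hYb : Y b = 0) (huv : G.Adj u v) (hYu : Y u < 0)
    (hYv : 0 < Y v) {ξ : ℝ} (hξ : ξ < 0) (hcr : ξ * (Y v - Y u) = X u * Y v - X v * Y u)
    (hfree : ∀ c d s, G.Adj c d → ξ < s → s < 0 → ¬ OnSeg X Y c d s 0) :
    ∃ w, G.Adj b w ∧ X w * Y v ≤ Y w * X v ∧ 0 < Y w := by
  have hξ' := hξ.ne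
  have D' := D.affine (1 / ξ) (-(X v / (Y v * ξ))) 0 (1 / Y v) 0 0 (by
    have : 1 / ξ * (1 / Y v) ≠ 0 := by positivity
    simpa using this)
  obtain ⟨w, h1, h2, h3⟩ := D'.exists_adj_of_free_side_normalized hM (b := b) (u := u) (v := v)
    (by simp [hXb, hYb]) (by simp [hYb]) (by field_simp; ring) (by field_simp; ring) huv
    (by
      have : 1 / Y v * Y u < 0 := mul_neg_of_pos_of_neg (by positivity) hYu
      simpa using this)
    (by field_simp; linarith)
    (by
      rintro c d s ha s0 s1 ⟨t, t0, t1, ex, ey⟩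
      have ey' : Y c + t * (Y d - Y c) = 0 := by
        have : 1 / Y v * (Y c + t * (Y d - Y c)) = 0 := by linarith
        exact (mul_eq_zero.1 this).resolve_left (by positivity)
      refine hfree c d (ξ * s) ha (by nlinarith) (by nlinarith) ⟨t, t0, t1, ?_, ey'.symm⟩
      rw [ex]
      have : X v / (Y v * ξ) * (Y c + t * (Y d - Y c)) = 0 := by rw [ey']; ring
      have h1 : ξ * (1 / ξ) = 1 := by field_simp
      linear_combination (X c + t * (X d - X c)) * h1 - ξ * this)
  have hw : 0 < Y w := by
    have : 0 < 1 / Y v * Y w := by linarith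
    exact (pos_iff_pos_of_mul_pos this).1 (by positivity)
  refine ⟨w, h1, ?_, hw⟩
  have e : 1 / ξ * X w + -(X v / (Y v * ξ)) * Y w + 0 = (X w * Y v - Y w * X v) / (Y v * ξ) := by
    field_simp; ring
  rw [e] at h2
  by_contra hc
  have := div_neg_of_pos_of_neg (sub_pos.2 (not_le.1 hc)) (mul_neg_of_pos_of_neg hYv hξ)
  linarith

/-- An edge that touches the negative horizontal axis without crossing it has an end on the axis
between the touching point and `b = 0`. -/
lemma exists_end_on_axis (D : Drawing G X Y) {b : Fin n} (hXb : X b = 0) (hYb : Y b = 0)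
    (hax : ∀ k, G.Adj b k → Y k = 0 → ¬ X k < 0) {c d : Fin n} (ha : G.Adj c d) {s : ℝ}
    (hs0 : s < 0) (hs : OnSeg X Y c d s 0) (h1 : ¬ (Y c < 0 ∧ 0 < Y d))
    (h2 : ¬ (Y d < 0 ∧ 0 < Y c)) : ∃ k, Y k = 0 ∧ s ≤ X k ∧ X k < 0 := by
  obtain ⟨t, t0, t1, ex, ey⟩ := id hs
  rcases t0.eq_or_lt with rfl | t0
  · exact ⟨c, by linarith, by linarith, by linarith⟩
  rcases t1.eq_or_lt with rfl | t1
  · exact ⟨d, by linarith, by linarith, by linarith⟩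
  have hbal : (1 - t) * Y c + t * Y d = 0 := by linarith
  have hYc : Y c = 0 := by
    rcases lt_trichotomy (Y c) 0 with h | h | h
    · refine absurd ⟨h, ?_⟩ h1
      by_contra h'
      linarith [mul_neg_of_pos_of_neg (sub_pos.2 t1) h,
        mul_nonpos_of_nonneg_of_nonpos t0.le (not_lt.1 h')]
    · exact h
    · refine absurd ⟨?_, h⟩ h2
      by_contra h'
      linarith [mul_pos (sub_pos.2 t1) h, mul_nonneg t0.le (not_lt.1 h')]
  have hYd : Y d = 0 := by
    rw [hYc, mul_zero, zero_add] at hbal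
    exact (mul_eq_zero.1 hbal).resolve_left t0.ne'
  have hend : ∀ c d, G.Adj c d → Y c = 0 → Y d = 0 → X c ≤ s → s ≤ X d →
      ∃ k, Y k = 0 ∧ s ≤ X k ∧ X k < 0 := by
    intro c d ha hYc hYd hc hd
    rcases lt_or_ge (X d) 0 with h | h
    · exact ⟨d, hYd, hd, h⟩
    · have hp : 0 < X d - X c := by linarith
      rcases D.vert c d b ha ⟨- X c / (X d - X c), by apply div_nonneg <;> linarith,
        by rw [div_le_one hp]; linarith, by rw [hXb]; field_simp; ring,
        by rw [hYb, hYc, hYd]; ring⟩ with rfl | rfl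
      · linarith
      · exact absurd (by linarith) (hax c ha.symm hYc)
  rcases le_total (X c) s with h | h
  · refine hend c d ha hYc hYd h ?_
    by_contra hlt
    nlinarith [mul_pos t0 (sub_pos.2 (not_le.1 hlt))]
  · refine hend d c ha.symm hYd hYc ?_ h
    by_contra hlt
    nlinarith [mul_pos t0 (sub_pos.2 (not_le.1 hlt))]

/-- A cut `{b, z}` whose sides both see `b` is not crossed by an edge beyond `b`. -/
lemma not_crossing_beyond (hM : SeeingAdjacent G) (D : Drawing G X Y) {C : Set (Fin n)}
    {a b z q : Fin n} (hXb : X b = 0) (hYb : Y b = 0) (hXz : X z = 1) (hYz : Y z = 0)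
    (hXa : X a = 0) (hYa : Y a = 1) (hba : G.Adj b a) (haC : a ∉ C) (hz : z ∉ C)
    (hcut : ∀ u ∈ C, ∀ w ∉ C, G.Adj u w → w = b ∨ w = z) (hq : q ∈ C) (hbq : G.Adj b q) :
    Y q < 0 ∧ ∀ u v, G.Adj u v → Y u < 0 → 0 < Y v → ¬ X u * Y v - X v * Y u < 0 := by
  classical
  have hCone : ∀ x y, G.Adj b x → G.Adj b y → x ∈ C → y ∉ C → y ≠ z → X x * Y y - X y * Y x ≠ 0 →
      ∃ α β : ℝ, 0 < α ∧ 0 < β ∧ 1 = α * X x + β * X y ∧ 0 = α * Y x + β * Y y := by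
    intro x y hx hy hxC hyC hyz hdet
    obtain ⟨α, β, α0, β0, e1, e2⟩ := D.inCone_of_cut hM hz hcut hx hy hxC hyC hyz
      (by simpa [hXb, hYb] using hdet)
    rw [hXb, hXz] at e1
    rw [hYb, hYz] at e2
    exact ⟨α, β, α0, β0, by linarith, by linarith⟩
  have haz : a ≠ z := by rintro rfl; linarith
  have hCneg : ∀ x ∈ C, G.Adj b x → Y x < 0 := by
    intro x hx hbx
    by_cases h0 : X x = 0
    · rcases lt_trichotomy (Y x) 0 with h | h | h
      · exact h
      · exact absurd (D.inj b x (by linarith) (by linarith)) hbx.ne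
      · exact (D.not_same_ray hba hbx (by rintro rfl; exact haC hx) h
          (by rw [hXb, hXa, h0]; ring) (by rw [hYb, hYa]; ring)).elim
    · obtain ⟨α, β, α0, β0, e1, e2⟩ := hCone x a hbx hba hx haC haz (by rw [hXa, hYa]; simpa)
      rw [hYa] at e2
      by_contra h
      linarith [mul_nonneg α0.le (not_lt.1 h)]
  have hYq := hCneg q hq hbq
  have hax : ∀ k, G.Adj b k → Y k = 0 → ¬ X k < 0 := by
    intro k hk hY hX
    by_cases hkC : k ∈ C
    · linarith [hCneg k hkC hk]
    · obtain ⟨α, β, α0, β0, e1, e2⟩ := hCone q k hbq hk hq hkC (by rintro rfl; linarith)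
        (by rw [hY]; simp [hX.ne, hYq.ne])
      rw [hY] at e2
      linarith [mul_neg_of_pos_of_neg α0 hYq]
  have hlow : ∀ k, G.Adj b k → Y k < 0 → k ∈ C := by
    intro k hk hY
    by_contra hkC
    have hkz : k ≠ z := by rintro rfl; linarith
    by_cases hdet : X q * Y k - X k * Y q = 0
    · refine D.not_same_ray hbq hk (by rintro rfl; exact hkC hq) (div_pos_of_neg_of_neg hY hYq)
        ?_ ?_
      · rw [hXb]
        have := hYq.ne
        field_simp
        linarith
      · rw [hYb]
        have := hYq.ne
        field_simp
        ring
    · obtain ⟨α, β, α0, β0, e1, e2⟩ := hCone q k hbq hk hq hkC hkz hdet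
      linarith [mul_neg_of_pos_of_neg α0 hYq, mul_neg_of_pos_of_neg β0 hY]
  refine ⟨hYq, ?_⟩
  by_contra! hne
  obtain ⟨u₀, v₀, h₀⟩ := hne
  -- the crossing closest to `b`
  obtain ⟨⟨u, v⟩, huv, hmax⟩ := Finset.exists_max_image
    (Finset.univ.filter fun e : Fin n × Fin n => G.Adj e.1 e.2 ∧ Y e.1 < 0 ∧ 0 < Y e.2 ∧
      X e.1 * Y e.2 - X e.2 * Y e.1 < 0)
    (fun e => (X e.1 * Y e.2 - X e.2 * Y e.1) / (Y e.2 - Y e.1)) ⟨(u₀, v₀), by simpa using h₀⟩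
  simp only [Finset.mem_filter, Finset.mem_univ, true_and] at huv hmax
  obtain ⟨hadj, hYu, hYv, hcr⟩ := huv
  obtain ⟨ξ, hξ⟩ : ∃ ξ, ξ = (X u * Y v - X v * Y u) / (Y v - Y u) := ⟨_, rfl⟩
  rw [← hξ] at hmax
  have hd : 0 < Y v - Y u := by linarith
  have hξ0 : ξ < 0 := by rw [hξ]; exact div_neg_of_neg_of_pos hcr hd
  have hξe : ξ * (Y v - Y u) = X u * Y v - X v * Y u := by rw [hξ]; field_simp
  have hstrict : ∀ c d s, G.Adj c d → ξ < s → s < 0 → OnSeg X Y c d s 0 →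
      ¬ (Y c < 0 ∧ 0 < Y d) := by
    rintro c d s ha s0 s1 ⟨t, t0, t1, ex, ey⟩ ⟨hc, hd⟩
    have hp : 0 < Y d - Y c := by linarith
    have e : s * (Y d - Y c) = X c * Y d - X d * Y c := by
      rw [ex]; linear_combination (X d - X c) * (-ey)
    have := hmax (c, d) ⟨ha, hc, hd, by rw [← e]; exact mul_neg_of_neg_of_pos s1 hp⟩
    simp only at this
    rw [← e, mul_div_assoc, div_self hp.ne', mul_one] at this
    linarith
  have haxis : ∀ k, Y k = 0 → ξ ≤ X k → ¬ X k < 0 := by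
    by_contra! hne
    obtain ⟨k₀, hk₀⟩ := hne
    obtain ⟨k, hk, hkmax⟩ := Finset.exists_max_image
      (Finset.univ.filter fun k => Y k = 0 ∧ ξ ≤ X k ∧ X k < 0) X ⟨k₀, by simpa using hk₀⟩
    simp only [Finset.mem_filter, Finset.mem_univ, true_and] at hk hkmax
    obtain ⟨k1, k2, k3⟩ := hk
    refine hax k (hM X Y D b k (by rintro rfl; linarith) ?_ ?_) k1 k3
    · intro w t t0 t1 ex ey
      rw [hXb] at ex
      rw [hYb, k1] at ey
      have := hkmax w ⟨by linarith, by nlinarith, by nlinarith⟩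
      nlinarith
    · intro c d x y t ha t0 t1 ex ey hs
      rw [hXb] at ex
      rw [hYb, k1] at ey
      have hy : y = 0 := by linarith
      rw [hy] at hs
      have hx1 : X k < x := by nlinarith
      have hx2 : x < 0 := by nlinarith
      obtain ⟨w, w1, w2, w3⟩ := D.exists_end_on_axis hXb hYb hax ha hx2 hs
        (hstrict c d x ha (by linarith) hx2 hs)
        (hstrict d c x ha.symm (by linarith) hx2 hs.symm)
      have := hkmax w ⟨w1, by linarith, w3⟩
      linarith
  have hfree : ∀ c d s, G.Adj c d → ξ < s → s < 0 → ¬ OnSeg X Y c d s 0 := by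
    intro c d s ha s0 s1 hs
    obtain ⟨w, w1, w2, w3⟩ := D.exists_end_on_axis hXb hYb hax ha s1 hs
      (hstrict c d s ha s0 s1 hs) (hstrict d c s ha.symm s0 s1 hs.symm)
    exact haxis w w1 (by linarith) w3
  obtain ⟨w, hw1, hw2, hw3⟩ := D.exists_adj_of_free_side hM hXb hYb hadj hYu hYv hξ0 hξe hfree
  obtain ⟨k, hk1, hk2, hk3⟩ := (D.affine 1 0 0 (-1) 0 0 (by norm_num)).exists_adj_of_free_side hM
    (b := b) (u := v) (v := u) (ξ := ξ) (by simp [hXb]) (by simp [hYb]) hadj.symm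
    (by simpa using hYv) (by simpa using hYu) hξ0 (by linarith) (by
      rintro c d s ha s0 s1 ⟨t, t0, t1, ex, ey⟩
      exact hfree c d s ha s0 s1 ⟨t, t0, t1, by linarith, by linarith⟩)
  have hk2' : X k * -Y u ≤ -Y k * X u := by linarith
  have hk3' : Y k < 0 := by linarith
  have hkC := hlow k hk1 hk3'
  have hwC : w ∉ C := fun h => by linarith [hCneg w h hw1]
  -- the cone spanned by `k` and `w` lies on the side of `b` away from `z`
  have hlin : (X k * -Y u) * (Y w * Y v) + (X w * Y v) * (-Y k * -Y u) < 0 := by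
    have i1 := mul_le_mul_of_nonneg_right hk2' (mul_pos hw3 hYv).le
    have i2 := mul_le_mul_of_nonneg_right hw2
      (mul_pos (neg_pos.2 hk3') (neg_pos.2 hYu)).le
    have i3 := mul_neg_of_pos_of_neg (mul_pos (neg_pos.2 hk3') hw3) hcr
    linarith
  obtain ⟨α, β, α0, β0, e1, e2⟩ := hCone k w hk1 hw1 hkC hwC (by rintro rfl; linarith) (by
    intro h
    have : (X k * -Y u) * (Y w * Y v) + (X w * Y v) * (-Y k * -Y u) =
      (-Y u * Y v) * (X k * Y w - X w * Y k) := by ring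
    rw [this, h, mul_zero] at hlin
    exact lt_irrefl _ hlin)
  have h3 : (X k * -Y u) * (Y w * Y v) * β + (X w * Y v) * (-Y k * -Y u) * β =
      (-Y u * Y v) * (-Y k) * 1 := by
    rw [e1]
    linear_combination (-(-Y u * Y v) * X k) * e2
  have h4 : 0 < (-Y u * Y v) * (-Y k) * 1 := by
    have := neg_pos.2 hYu
    have := neg_pos.2 hk3'
    positivity
  linarith [mul_neg_of_neg_of_pos hlin β0]

/-- Shearing the lower half plane of a drawing none of whose edges crosses the horizontal axis. -/
lemma shear_below (D : Drawing G X Y) (hcr : ∀ u v, G.Adj u v → Y u < 0 → ¬ 0 < Y v) (s : ℝ) :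
    Drawing G (fun k => X k + s * min (Y k) 0) Y := by
  refine D.map (fun x y => x + s * min y 0) (fun _ y => y) ?_ ?_
  · rintro x y x' y' h1 rfl
    exact ⟨by linarith, rfl⟩
  · rintro u v x' y' ha ⟨t, t0, t1, ex, ey⟩
    refine ⟨_, _, ⟨t, t0, t1, rfl, rfl⟩, ?_, ey.symm⟩
    have hmin : min (Y u + t * (Y v - Y u)) 0 = min (Y u) 0 + t * (min (Y v) 0 - min (Y u) 0) := by
      by_cases h : Y u < 0 ∨ Y v < 0
      · have hle : Y u ≤ 0 ∧ Y v ≤ 0 := by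
          rcases h with h | h
          · exact ⟨h.le, not_lt.1 (hcr u v ha h)⟩
          · exact ⟨not_lt.1 (hcr v u ha.symm h), h.le⟩
        rw [min_eq_left hle.1, min_eq_left hle.2, min_eq_left]
        nlinarith [mul_nonneg t0 (neg_nonneg.2 hle.2),
          mul_nonneg (sub_nonneg.2 t1) (neg_nonneg.2 hle.1)]
      · push Not at h
        rw [min_eq_right h.1, min_eq_right h.2, min_eq_right]
        · ring
        · nlinarith [mul_nonneg t0 h.2, mul_nonneg (sub_nonneg.2 t1) h.1]
    rw [ex, hmin]
    ring

/-- Two adjacent vertices with a common neighbour outside `C` do not separate `C` from it, if both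
have neighbours in `C`. -/
lemma not_cut_of_both (hM : SeeingAdjacent G) (D : Drawing G X Y) {C : Set (Fin n)}
    {a b z q r : Fin n} (hbz : G.Adj b z) (hba : G.Adj b a) (hza : G.Adj z a) (ha : a ∉ C)
    (hb : b ∉ C) (hz : z ∉ C) (hcut : ∀ u ∈ C, ∀ w ∉ C, G.Adj u w → w = b ∨ w = z)
    (hq : q ∈ C) (hbq : G.Adj b q) (hr : r ∈ C) (hzr : G.Adj z r) : False := by
  obtain ⟨X, Y, D, hXb, hYb, hXz, hYz, hXa, hYa, -⟩ :=
    D.exists_normalized b z a (D.det_ne_zero_of_triangle hbz hba hza)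
  obtain ⟨hYq, hleft⟩ := D.not_crossing_beyond hM hXb hYb hXz hYz hXa hYa hba ha hz hcut hq hbq
  obtain ⟨-, hright⟩ := (D.affine (-1) (-1) 0 1 1 0 (by norm_num)).not_crossing_beyond hM
    (b := z) (z := b) (a := a) (by rw [hXz, hYz]; norm_num) (by rw [hYz]; norm_num)
    (by rw [hXb, hYb]; norm_num) (by rw [hYb]; norm_num) (by rw [hXa, hYa]; norm_num)
    (by rw [hYa]; norm_num) hza ha hb (fun u hu w hw h => (hcut u hu w hw h).symm) hr hzr
  have hcr : ∀ u v, G.Adj u v → Y u < 0 → ¬ 0 < Y v := by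
    intro u v huv hu hv
    have h1 := not_lt.1 (hleft u v huv hu hv)
    have h2 := not_lt.1 (hright u v huv (by linarith) (by linarith))
    have hd : 0 < Y v - Y u := by linarith
    have hne : s(u, v) ≠ s(b, z) := by
      intro h
      rcases Sym2.eq_iff.1 h with ⟨rfl, rfl⟩ | ⟨rfl, rfl⟩ <;> linarith
    obtain ⟨k, k1, k2, -, ky⟩ := D.cross u v b z ((X u * Y v - X v * Y u) / (Y v - Y u)) 0 huv hbz
      hne ⟨- Y u / (Y v - Y u), by apply div_nonneg <;> linarith, by rw [div_le_one hd]; linarith,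
        by field_simp; ring, by field_simp; ring⟩
      ⟨(X u * Y v - X v * Y u) / (Y v - Y u), by positivity,
        by rw [div_le_one hd]; linarith, by rw [hXb, hXz]; ring, by rw [hYb, hYz]; ring⟩
    rcases k1 with rfl | rfl <;> linarith
  -- after the shear, the cone between `q` and `a` opens away from `z`
  have hYq' := hYq.ne
  have hXq : X q + (X q + 1) / (-Y q) * min (Y q) 0 = -1 := by
    rw [min_eq_left hYq.le]
    field_simp
    ring
  obtain ⟨α, β, α0, β0, e1, -⟩ := (D.shear_below hcr ((X q + 1) / (-Y q))).inCone_of_cut hM hz hcut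
    hbq hba hq ha hza.ne.symm (by rw [hXq, hXb, hYb, hXa, hYa]; norm_num)
  beta_reduce at e1
  rw [hXq, hXb, hYb, hXa, hYa, hXz, hYz] at e1
  norm_num at e1
  linarith

/-- A maximal plane graph is connected. -/
lemma not_disconnected (hM : SeeingAdjacent G) (D : Drawing G X Y) {C : Set (Fin n)}
    {x y : Fin n} (hx : x ∈ C) (hy : y ∉ C) (hcut : ∀ u ∈ C, ∀ w ∉ C, ¬ G.Adj u w) : False := by
  classical
  obtain ⟨r, hr, hrmax⟩ := Finset.exists_max_image (Finset.univ.filter fun k => k ∉ C) X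
    ⟨y, by simpa using hy⟩
  obtain ⟨l, hl, hlmin⟩ := Finset.exists_min_image (Finset.univ.filter fun k => k ∈ C) X
    ⟨x, by simpa using hx⟩
  simp only [Finset.mem_filter, Finset.mem_univ, true_and] at hr hrmax hl hlmin
  -- translate `C` to the right of the other vertices
  obtain ⟨K, hK⟩ : ∃ K, K = X r - X l + 1 := ⟨_, rfl⟩
  obtain ⟨X', hX'⟩ : ∃ X' : Fin n → ℝ, X' = fun k => if k ∈ C then X k + K else X k := ⟨_, rfl⟩
  have hin : ∀ k ∈ C, X' k = X k + K := fun k hk => by simp [hX', hk]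
  have hout : ∀ k ∉ C, X' k = X k := fun k hk => by simp [hX', hk]
  have hinl : ∀ k ∈ C, X r + 1 ≤ X' k := fun k hk => by
    rw [hin k hk]; linarith [hlmin k hk]
  have houtr : ∀ k ∉ C, X' k ≤ X r := fun k hk => by rw [hout k hk]; exact hrmax k hk
  have hside : ∀ u v, G.Adj u v → (u ∈ C ∧ v ∈ C) ∨ (u ∉ C ∧ v ∉ C) := by
    intro u v h
    by_cases hu : u ∈ C <;> by_cases hv : v ∈ C
    · exact .inl ⟨hu, hv⟩
    · exact (hcut u hu v hv h).elim
    · exact (hcut v hv u hu h.symm).elim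
    · exact .inr ⟨hu, hv⟩
  have hsegin : ∀ u v s t, u ∈ C → v ∈ C → OnSeg X' Y u v s t →
      X r + 1 ≤ s ∧ OnSeg X Y u v (s - K) t := by
    rintro u v s t hu hv ⟨q, q0, q1, ex, ey⟩
    refine ⟨?_, q, q0, q1, ?_, ey⟩
    · have h1 := hinl u hu
      have h2 := hinl v hv
      nlinarith [mul_nonneg q0 (sub_nonneg.2 h2), mul_nonneg (sub_nonneg.2 q1) (sub_nonneg.2 h1)]
    · rw [ex, hin u hu, hin v hv]; ring
  have hsegout : ∀ u v s t, u ∉ C → v ∉ C → OnSeg X' Y u v s t →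
      s ≤ X r ∧ OnSeg X Y u v s t := by
    rintro u v s t hu hv ⟨q, q0, q1, ex, ey⟩
    refine ⟨?_, q, q0, q1, ?_, ey⟩
    · have h1 := houtr u hu
      have h2 := houtr v hv
      nlinarith [mul_nonneg q0 (sub_nonneg.2 h2), mul_nonneg (sub_nonneg.2 q1) (sub_nonneg.2 h1)]
    · rw [ex, hout u hu, hout v hv]
  have D' : Drawing G X' Y := by
    refine ⟨fun u v h1 h2 => ?_, fun u v w ha hs => ?_, fun u v c d s t ha hb hne hs ht => ?_⟩
    · by_cases hu : u ∈ C <;> by_cases hv : v ∈ C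
      · rw [hin u hu, hin v hv] at h1
        exact D.inj u v (by linarith) h2
      · linarith [hinl u hu, houtr v hv]
      · linarith [hinl v hv, houtr u hu]
      · rw [hout u hu, hout v hv] at h1
        exact D.inj u v h1 h2
    · rcases hside u v ha with ⟨hu, hv⟩ | ⟨hu, hv⟩
      · obtain ⟨h1, h2⟩ := hsegin u v _ _ hu hv hs
        by_cases hw : w ∈ C
        · rw [hin w hw, add_sub_cancel_right] at h2
          exact D.vert u v w ha h2
        · linarith [houtr w hw]
      · obtain ⟨h1, h2⟩ := hsegout u v _ _ hu hv hs
        by_cases hw : w ∈ C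
        · linarith [hinl w hw]
        · rw [hout w hw] at h2
          exact D.vert u v w ha h2
    · rcases hside u v ha with ⟨hu, hv⟩ | ⟨hu, hv⟩ <;> rcases hside c d hb with ⟨hc, hd⟩ | ⟨hc, hd⟩
      · obtain ⟨k, k1, k2, kx, ky⟩ := D.cross u v c d _ _ ha hb hne (hsegin u v _ _ hu hv hs).2
          (hsegin c d _ _ hc hd ht).2
        have hk : k ∈ C := by rcases k1 with rfl | rfl <;> assumption
        exact ⟨k, k1, k2, by rw [hin k hk, kx]; ring, ky⟩
      · linarith [(hsegin u v _ _ hu hv hs).1, (hsegout c d _ _ hc hd ht).1]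
      · linarith [(hsegin c d _ _ hc hd ht).1, (hsegout u v _ _ hu hv hs).1]
      · obtain ⟨k, k1, k2, kx, ky⟩ := D.cross u v c d _ _ ha hb hne (hsegout u v _ _ hu hv hs).2
          (hsegout c d _ _ hc hd ht).2
        have hk : k ∉ C := by rcases k1 with rfl | rfl <;> assumption
        exact ⟨k, k1, k2, by rw [hout k hk, kx], ky⟩
  have hXr : X' r = X r := hout r hr
  have hXl : X' l = X r + 1 := by rw [hin l hl, hK]; ring
  refine hcut l hl r hr (hM X' Y D' r l (by rintro rfl; exact hr hl) ?_ ?_).symm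
  · intro w t t0 t1 ex ey
    rw [hXr, hXl] at ex
    by_cases hw : w ∈ C
    · linarith [hinl w hw]
    · linarith [houtr w hw]
  · intro c d s s' t ha t0 t1 ex ey hs
    rw [hXr, hXl] at ex
    rcases hside c d ha with ⟨hc, hd⟩ | ⟨hc, hd⟩
    · linarith [(hsegin c d _ _ hc hd hs).1]
    · linarith [(hsegout c d _ _ hc hd hs).1]

end Drawing

section Cuts

variable {n : ℕ} {G : SimpleGraph (Fin n)}

/-- In a triangulation, two vertices of a triangle do not separate the third one from a nonempty
vertex set. -/
lemma IsTriangulation.not_cut (hG : IsTriangulation G) {C : Set (Fin n)} {a b z t : Fin n}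
    (hbz : G.Adj b z) (hba : G.Adj b a) (hza : G.Adj z a) (ht : t ∈ C) (ha : a ∉ C) (hb : b ∉ C)
    (hz : z ∉ C) (hcut : ∀ u ∈ C, ∀ w ∉ C, G.Adj u w → w = b ∨ w = z) : False := by
  have hM := hG.seeingAdjacent
  obtain ⟨⟨p, hp⟩, -⟩ := hG
  have D := hp.drawing
  -- a single vertex of the pair does not separate either
  have hone : ∀ b z, G.Adj b z → G.Adj b a → G.Adj z a → z ∉ C →
      (∀ u ∈ C, ∀ w ∉ C, G.Adj u w → w = b) → ∀ q ∈ C, ¬ G.Adj b q := by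
    intro b z hbz hba hza hz hcut q hq hbq
    have hb : b ∉ C := fun h => hz (by_contra fun hz' => hbz.ne (hcut b h z hz' hbz).symm)
    have hnot : ∀ y, G.Adj b y → y ∉ C →
        (p q 0 - p b 0) * (p y 1 - p b 1) - (p y 0 - p b 0) * (p q 1 - p b 1) = 0 := by
      intro y hy hyC
      by_contra hdet
      obtain ⟨α, β, α0, β0, e1, e2⟩ := D.inCone_of_cut hM hb
        (fun u hu w hw h => .inl (hcut u hu w hw h)) hbq hy hq hyC hy.ne.symm hdet
      have : α * ((p q 0 - p b 0) * (p y 1 - p b 1) - (p y 0 - p b 0) * (p q 1 - p b 1)) = 0 := by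
        linear_combination (p y 0 - p b 0) * e2 - (p y 1 - p b 1) * e1
      exact mul_ne_zero α0.ne' hdet this
    obtain ⟨μ, h1, h2⟩ := D.exists_smul_of_det_eq_zero hbq.ne (hnot a hba ha)
    obtain ⟨ν, h3, h4⟩ := D.exists_smul_of_det_eq_zero hbq.ne (hnot z hbz hz)
    refine D.det_ne_zero_of_triangle hbz hba hza ?_
    rw [h1, h2, h3, h4]
    ring
  by_cases h1 : ∃ q ∈ C, G.Adj b q <;> by_cases h2 : ∃ r ∈ C, G.Adj z r
  · obtain ⟨q, hq, hbq⟩ := h1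
    obtain ⟨r, hr, hzr⟩ := h2
    exact D.not_cut_of_both hM hbz hba hza ha hb hz hcut hq hbq hr hzr
  · obtain ⟨q, hq, hbq⟩ := h1
    refine hone b z hbz hba hza hz (fun u hu w hw h => ?_) q hq hbq
    refine (hcut u hu w hw h).resolve_right ?_
    rintro rfl
    exact h2 ⟨u, hu, h.symm⟩
  · obtain ⟨r, hr, hzr⟩ := h2
    refine hone z b hbz.symm hza hba hb (fun u hu w hw h => ?_) r hr hzr
    refine (hcut u hu w hw h).resolve_left ?_
    rintro rfl
    exact h1 ⟨u, hu, h.symm⟩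
  · refine D.not_disconnected hM ht ha (fun u hu w hw h => ?_)
    rcases hcut u hu w hw h with rfl | rfl
    · exact h1 ⟨u, hu, h.symm⟩
    · exact h2 ⟨u, hu, h.symm⟩

end Cuts

section SeparatingTriangles

variable {n : ℕ} {G : SimpleGraph (Fin n)} {D D' : Set (Fin n)} {u v w : Fin n}

namespace AvoidReach

lemma refl (hu : u ∉ D) : AvoidReach G D u u := ⟨.nil, by simpa using hu⟩

lemma symm (h : AvoidReach G D u v) : AvoidReach G D v u := by
  obtain ⟨p, hp⟩ := h
  exact ⟨p.reverse, by simpa using hp⟩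

lemma trans (h : AvoidReach G D u v) (h' : AvoidReach G D v w) : AvoidReach G D u w := by
  obtain ⟨p, hp⟩ := h
  obtain ⟨q, hq⟩ := h'
  refine ⟨p.append q, fun x hx => ?_⟩
  rcases (SimpleGraph.Walk.mem_support_append_iff p q).1 hx with hx | hx
  exacts [hp x hx, hq x hx]

lemma of_adj (h : G.Adj u v) (hu : u ∉ D) (hv : v ∉ D) : AvoidReach G D u v :=
  ⟨h.toWalk, by simp [hu, hv]⟩

lemma right_notMem (h : AvoidReach G D u v) : v ∉ D := by
  obtain ⟨p, hp⟩ := h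
  exact hp v p.end_mem_support

/-- A walk avoiding `D` also avoids `D'` if no vertex reachable from its start lies in `D'`. -/
lemma avoid (h : AvoidReach G D u v) (hD' : ∀ x, AvoidReach G D u x → x ∉ D') :
    AvoidReach G D' u v := by
  classical
  obtain ⟨p, hp⟩ := h
  exact ⟨p, fun x hx => hD' x
    ⟨p.takeUntil x hx, fun y hy => hp y (p.support_takeUntil_subset_support hx hy)⟩⟩

lemma reachable_induce (h : AvoidReach G D u v) (hu : u ∉ D) (hv : v ∉ D) :
    (G.induce {x | x ∉ D}).Reachable ⟨u, hu⟩ ⟨v, hv⟩ := by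
  obtain ⟨p, hp⟩ := h
  exact ⟨p.induce {x | x ∉ D} hp⟩

end AvoidReach

section Interior

variable {outF : Finset (Fin n)} {a b c x y z : Fin n}

lemma interiorOf_congr (h : ({a, b, c} : Set (Fin n)) = {x, y, z}) :
    interiorOf G outF a b c = interiorOf G outF x y z := by
  simp only [interiorOf, h]

lemma notMem_outF_of_mem_interiorOf (hu : u ∈ interiorOf G outF a b c) : u ∉ outF :=
  fun ho => hu.2 ⟨u, ho, hu.1, .refl hu.1⟩

lemma AvoidReach.mem_interiorOf (h : AvoidReach G {a, b, c} u v)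
    (hu : u ∈ interiorOf G outF a b c) : v ∈ interiorOf G outF a b c :=
  ⟨h.right_notMem, fun ⟨o, ho, hoD, hr⟩ => hu.2 ⟨o, ho, hoD, h.trans hr⟩⟩

lemma mem_interiorOf_of_adj (hu : u ∈ interiorOf G outF a b c) (h : G.Adj u v)
    (hv : v ∉ ({a, b, c} : Set (Fin n))) : v ∈ interiorOf G outF a b c :=
  (AvoidReach.of_adj h hu.1 hv).mem_interiorOf hu

/-- Every component of the complement of a triangle is attached to each corner. -/
lemma IsTriangulation.exists_avoidReach_adj (hG : IsTriangulation G) (hab : G.Adj a b)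
    (hbc : G.Adj b c) (hac : G.Adj a c) {t : Fin n} (ht : t ∉ ({a, b, c} : Set (Fin n))) :
    ∃ u, AvoidReach G {a, b, c} t u ∧ G.Adj u a := by
  by_contra! hno
  refine hG.not_cut (C := {u | AvoidReach G {a, b, c} t u}) hbc hab.symm hac.symm (.refl ht)
    (fun h => h.right_notMem (by simp)) (fun h => h.right_notMem (by simp))
    (fun h => h.right_notMem (by simp)) fun u hu w hw huw => ?_
  by_contra! hne
  have hwa : w ≠ a := fun h => hno u hu (h ▸ huw)
  have hwD : w ∉ ({a, b, c} : Set (Fin n)) := by simp [hwa, hne]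
  exact hw (AvoidReach.trans hu (.of_adj huw (AvoidReach.right_notMem hu) hwD))

lemma interiorOf_nonempty (hface : ∀ u ∈ outF, ∀ v ∈ outF, u ≠ v → G.Adj u v)
    (hD : IsSepTriangle G a b c) {t : Fin n} (ht : t ∉ ({a, b, c} : Set (Fin n))) :
    (interiorOf G outF a b c).Nonempty := by
  by_contra! hempty
  have key : ∀ u ∉ ({a, b, c} : Set (Fin n)), ∃ o ∈ outF, o ∉ ({a, b, c} : Set (Fin n)) ∧
      AvoidReach G {a, b, c} u o := by
    intro u hu
    by_contra hno
    exact (hempty ▸ (show u ∈ interiorOf G outF a b c from ⟨hu, hno⟩) : u ∈ (∅ : Set (Fin n)))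
  have : Nonempty {v : Fin n | v ∉ ({a, b, c} : Set (Fin n))} := ⟨⟨t, ht⟩⟩
  refine hD.2.2.2 ⟨?_⟩
  rintro ⟨u, hu⟩ ⟨v, hv⟩
  obtain ⟨o, ho, hoD, hr⟩ := key u hu
  obtain ⟨o', ho', hoD', hr'⟩ := key v hv
  have hoo : AvoidReach G {a, b, c} o o' := by
    by_cases h : o = o'
    · exact h ▸ .refl hoD
    · exact .of_adj (hface o ho o' ho' h) hoD hoD'
  exact ((hr.trans hoo).trans hr'.symm).reachable_induce hu hv

/-- A triangle containing `abc` and sharing with it exactly the edge `ab` has `c` inside. -/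
lemma IsTriangulation.mem_interiorOf_of_shared_edge (hG : IsTriangulation G)
    (hface : ∀ u ∈ outF, ∀ v ∈ outF, u ≠ v → G.Adj u v) (hD : IsSepTriangle G a b c)
    (haz : G.Adj a z) (hbz : G.Adj b z)
    (hsub : interiorOf G outF a b c ⊂ interiorOf G outF a b z) :
    c ∈ interiorOf G outF a b z := by
  have hzc : z ≠ c := by rintro rfl; exact hsub.ne rfl
  obtain ⟨hab, hbc, hac, -⟩ := id hD
  have hz : z ∉ ({a, b, c} : Set (Fin n)) := by simp [hzc, haz.ne', hbz.ne']
  obtain ⟨i, hi⟩ := interiorOf_nonempty hface hD hz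
  have hperm : ({c, a, b} : Set (Fin n)) = {a, b, c} := by ext; simp; tauto
  obtain ⟨u, hu, huc⟩ := hG.exists_avoidReach_adj hac.symm hab hbc.symm (hperm ▸ hi.1)
  exact mem_interiorOf_of_adj (hsub.subset ((hperm ▸ hu).mem_interiorOf hi)) huc
    (by simp [hac.ne', hbc.ne', hzc.symm])

/-- Triangles containing `abc` cannot share both the edge `ab` and the edge `bc` with it. -/
lemma IsTriangulation.not_two_shared_edges (hG : IsTriangulation G) (houtF : outF.card = 3)
    (hface : ∀ u ∈ outF, ∀ v ∈ outF, u ≠ v → G.Adj u v) (hD : IsSepTriangle G a b c)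
    (haz : G.Adj a z) (hbz : G.Adj b z)
    (hX : interiorOf G outF a b c ⊂ interiorOf G outF a b z)
    (hbw : G.Adj b w) (hcw : G.Adj c w)
    (hY : interiorOf G outF a b c ⊂ interiorOf G outF c b w) : False := by
  have hperm : ({c, b, a} : Set (Fin n)) = {a, b, c} := by ext; simp; tauto
  obtain ⟨hab, hbc, hac, hcon⟩ := id hD
  have hD' : IsSepTriangle G c b a := ⟨hbc.symm, hab.symm, hac.symm, hperm ▸ hcon⟩
  have hcX := hG.mem_interiorOf_of_shared_edge hface hD haz hbz hX
  have haY := hG.mem_interiorOf_of_shared_edge hface hD' hcw hbw (interiorOf_congr hperm ▸ hY)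
  have hwX : w = z ∨ w ∈ interiorOf G outF a b z := by
    by_cases hwz : w = z
    · exact .inl hwz
    · have haw : a ≠ w := fun h => haY.1 (by simp [h])
      exact .inr (mem_interiorOf_of_adj hcX hcw (by simp [haw.symm, hbw.ne', hwz]))
  obtain ⟨t, ht, htbz⟩ : ∃ t ∈ outF, t ∉ ({b, z} : Finset (Fin n)) :=
    Finset.exists_mem_notMem_of_card_lt_card
      (by rw [houtF]; exact Finset.card_le_two.trans_lt (by norm_num))
  have hta : t ≠ a := by rintro rfl; exact notMem_outF_of_mem_interiorOf haY ht
  have htX : t ∉ ({a, b, z} : Set (Fin n)) := by simp_all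
  have hout : ∀ x, AvoidReach G {a, b, z} t x → x ∉ ({c, b, w} : Set (Fin n)) := by
    intro x hx hxY
    have hxI : x ∉ interiorOf G outF a b z := fun h =>
      notMem_outF_of_mem_interiorOf (hx.symm.mem_interiorOf h) ht
    have hxX := hx.right_notMem
    rcases hxY with rfl | rfl | rfl
    · exact hxI hcX
    · simp at hxX
    · rcases hwX with rfl | h
      · simp at hxX
      · exact hxI h
  obtain ⟨u, hu, hua⟩ := hG.exists_avoidReach_adj hab hbz haz htX
  have hta' : AvoidReach G {c, b, w} t a :=
    (hu.avoid hout).trans (.of_adj hua (hout u hu) haY.1)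
  exact notMem_outF_of_mem_interiorOf (hta'.symm.mem_interiorOf haY) ht

/-- A triangle through the edge `ab` can be written as `abw` for some common neighbour `w`. -/
lemma IsSepTriangle.exists_third (hT : IsSepTriangle G x y z)
    (he : s(a, b) ∈ ({s(x, y), s(y, z), s(x, z)} : Set (Sym2 (Fin n)))) :
    ∃ w, G.Adj a w ∧ G.Adj b w ∧ interiorOf G outF x y z = interiorOf G outF a b w := by
  obtain ⟨hxy, hyz, hxz, -⟩ := hT
  simp only [Set.mem_insert_iff, Set.mem_singleton_iff, Sym2.eq_iff] at he
  rcases he with (⟨rfl, rfl⟩ | ⟨rfl, rfl⟩) | (⟨rfl, rfl⟩ | ⟨rfl, rfl⟩) | (⟨rfl, rfl⟩ | ⟨rfl, rfl⟩)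
  · exact ⟨z, hxz, hyz, rfl⟩
  · exact ⟨z, hyz, hxz, interiorOf_congr (by ext; simp; tauto)⟩
  · exact ⟨x, hxy.symm, hxz.symm, interiorOf_congr (by ext; simp; tauto)⟩
  · exact ⟨x, hxz.symm, hxy.symm, interiorOf_congr (by ext; simp; tauto)⟩
  · exact ⟨y, hxy, hyz.symm, interiorOf_congr (by ext; simp; tauto)⟩
  · exact ⟨y, hyz.symm, hxy, interiorOf_congr (by ext; simp; tauto)⟩

/-- The edge `e` lies on a separating triangle whose interior properly contains `I`. -/
def OnContainingTriangle (G : SimpleGraph (Fin n)) (outF : Finset (Fin n)) (I : Set (Fin n))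
    (e : Sym2 (Fin n)) : Prop :=
  ∃ x y z : Fin n, IsSepTriangle G x y z ∧ I ⊂ interiorOf G outF x y z ∧
    e ∈ ({s(x, y), s(y, z), s(x, z)} : Set (Sym2 (Fin n)))

lemma IsTriangulation.not_onContainingTriangle_two (hG : IsTriangulation G)
    (houtF : outF.card = 3) (hface : ∀ u ∈ outF, ∀ v ∈ outF, u ≠ v → G.Adj u v)
    (hD : IsSepTriangle G a b c)
    (hab : OnContainingTriangle G outF (interiorOf G outF a b c) s(a, b))
    (hcb : OnContainingTriangle G outF (interiorOf G outF a b c) s(c, b)) : False := by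
  obtain ⟨x, y, z, hT, hX, he⟩ := hab
  obtain ⟨x', y', z', hT', hY, he'⟩ := hcb
  obtain ⟨w, haw, hbw, hI⟩ := hT.exists_third (outF := outF) he
  obtain ⟨w', hcw', hbw', hI'⟩ := hT'.exists_third (outF := outF) he'
  exact hG.not_two_shared_edges houtF hface hD haw hbw (hI ▸ hX) hbw' hcw' (hI' ▸ hY)

end Interior

end SeparatingTriangles

/-- A separating triangle shares at most one of its edges with separating
triangles that contain it (containment: proper inclusion of interiors). -/
theorem sepTriangle_at_most_one_shared_edge_with_containing
    (n : ℕ) (G : SimpleGraph (Fin n)) (hG : IsTriangulation G)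
    (outF : Finset (Fin n)) (houtF : outF.card = 3)
    (hface : ∀ u ∈ outF, ∀ v ∈ outF, u ≠ v → G.Adj u v)
    (a b c : Fin n) (hD : IsSepTriangle G a b c) :
    Set.ncard {e : Sym2 (Fin n) |
      e ∈ ({s(a, b), s(b, c), s(a, c)} : Set (Sym2 (Fin n))) ∧
      ∃ x y z : Fin n, IsSepTriangle G x y z ∧
        interiorOf G outF a b c ⊂ interiorOf G outF x y z ∧
        e ∈ ({s(x, y), s(y, z), s(x, z)} : Set (Sym2 (Fin n)))} ≤ 1 := by
  change Set.ncard {e | e ∈ ({s(a, b), s(b, c), s(a, c)} : Set (Sym2 (Fin n))) ∧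
    OnContainingTriangle G outF (interiorOf G outF a b c) e} ≤ 1
  have hbca : ({b, c, a} : Set (Fin n)) = {a, b, c} := by ext; simp; tauto
  have hcab : ({c, a, b} : Set (Fin n)) = {a, b, c} := by ext; simp; tauto
  obtain ⟨hab, hbc, hac, hcon⟩ := id hD
  have hDb : IsSepTriangle G b c a := ⟨hbc, hac.symm, hab.symm, hbca ▸ hcon⟩
  have hDc : IsSepTriangle G c a b := ⟨hac.symm, hab, hbc.symm, hcab ▸ hcon⟩
  have h1 := hG.not_onContainingTriangle_two houtF hface hD
  have h2 := hG.not_onContainingTriangle_two houtF hface hDb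
  have h3 := hG.not_onContainingTriangle_two houtF hface hDc
  rw [interiorOf_congr hbca] at h2
  rw [interiorOf_congr hcab, Sym2.eq_swap (a := c) (b := a), Sym2.eq_swap (a := b) (b := a)] at h3
  rw [Sym2.eq_swap (a := c) (b := b)] at h1
  rw [Set.ncard_le_one]
  rintro e ⟨he, hTe⟩ f ⟨hf, hTf⟩
  rcases he with rfl | rfl | rfl <;> rcases hf with rfl | rfl | rfl <;> first | rfl | tauto
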